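/- arXiv:2412.00295 — 4 statements merged into one kernel-verified Lean document; each statement's English description precedes it below -/
import Mathlib

section
/- The matrix X_ρ satisfies X_ρ² = λ·X_ρ, where λ = Σ_{k=0}^{τ-1} ρ^{2k}. -/
open Matrix Finset

/-- Integer power of a matrix `U`, where negative powers are interpreted as
powers of the conjugate transpose `Uᴴ`. -/
noncomputable def zpowU {n : ℕ} (U : Matrix (Fin n) (Fin n) ℂ) : ℤ → Matrix (Fin n) (Fin n) ℂ :=
  fun z => if 0 ≤ z then U ^ z.toNat else Uᴴ ^ (-z).toNat

/-- The τn×τn block matrix `X_ρ` whose (i,j)-th n×n block (0-based `i, j`) is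
`ρ^(i+j) · U^(j-i)`. -/
noncomputable def Xmat {n : ℕ} (τ : ℕ) (ρ : ℝ) (U : Matrix (Fin n) (Fin n) ℂ) :
    Matrix (Fin τ × Fin n) (Fin τ × Fin n) ℂ :=
  fun p q => (ρ : ℂ) ^ ((p.1 : ℕ) + (q.1 : ℕ)) * zpowU U ((q.1 : ℤ) - (p.1 : ℤ)) p.2 q.2

theorem zpowU_unit {n : ℕ} (V : (Matrix (Fin n) (Fin n) ℂ)ˣ)
    (U : Matrix (Fin n) (Fin n) ℂ) (h1 : (V : Matrix (Fin n) (Fin n) ℂ) = U)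
    (h2 : ((V⁻¹ : (Matrix (Fin n) (Fin n) ℂ)ˣ) : Matrix (Fin n) (Fin n) ℂ) = Uᴴ) (z : ℤ) :
    zpowU U z = ((V ^ z : (Matrix (Fin n) (Fin n) ℂ)ˣ) : Matrix (Fin n) (Fin n) ℂ) := by
  unfold zpowU
  split_ifs with h
  · obtain ⟨m, rfl⟩ := Int.eq_ofNat_of_zero_le h
    simp [h1]
  · obtain ⟨m, hm⟩ := Int.eq_ofNat_of_zero_le (show 0 ≤ -z by omega)
    obtain rfl : z = -(m : ℤ) := by omega
    rw [_root_.zpow_neg, _root_.zpow_natCast, ← _root_.inv_pow, Units.val_pow_eq_pow_val, h2]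
    simp

theorem zpowU_mul {n : ℕ} (U : Matrix (Fin n) (Fin n) ℂ) (hU₁ : Uᴴ * U = 1)
    (hU₂ : U * Uᴴ = 1) (a b : ℤ) : zpowU U a * zpowU U b = zpowU U (a + b) := by
  have key := zpowU_unit ⟨U, Uᴴ, hU₂, hU₁⟩ U rfl rfl
  rw [key, key, key, _root_.zpow_add, Units.val_mul]

/-- `X_ρ² = λ • X_ρ` with `λ = ∑_{k=0}^{τ-1} ρ^(2k)`. -/
theorem stmt_0 {n τ : ℕ} (hn : 0 < n) (hτ : 0 < τ)
    (U : Matrix (Fin n) (Fin n) ℂ) (hU₁ : Uᴴ * U = 1) (hU₂ : U * Uᴴ = 1)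
    (ρ : ℝ) (hρ : ρ ∈ Set.Ioc (0 : ℝ) 1) :
    Xmat τ ρ U * Xmat τ ρ U =
      (((∑ k ∈ Finset.range τ, ρ ^ (2 * k) : ℝ)) : ℂ) • Xmat τ ρ U := by
  ext ⟨i, a⟩ ⟨j, b⟩
  rw [Matrix.mul_apply, Fintype.sum_prod_type, Matrix.smul_apply, smul_eq_mul,
    Complex.ofReal_sum, Finset.sum_mul, Finset.sum_range]
  refine Finset.sum_congr rfl fun k _ => ?_
  have h := zpowU_mul U hU₁ hU₂ ((k : ℤ) - (i : ℤ)) ((j : ℤ) - (k : ℤ))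
  rw [show ((k : ℤ) - (i : ℤ)) + ((j : ℤ) - (k : ℤ)) = (j : ℤ) - (i : ℤ) by ring] at h
  simp only [Xmat]
  rw [← h, Matrix.mul_apply, Finset.mul_sum, Finset.mul_sum]
  refine Finset.sum_congr rfl fun c _ => ?_
  push_cast
  ring
end

section
/- Every eigenvalue of the matrix X_ρ is either 0 or λ; that is, if X_ρ ξ = κ ξ for some nonzero vector ξ ∈ ℂ^{τn}, then κ = 0 or κ = λ. -/
open Matrix Finset

theorem zpowU_sub {n : ℕ} (U : Matrix (Fin n) (Fin n) ℂ) (hU₁ : Uᴴ * U = 1) (i j : ℕ) :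
    zpowU U ((j : ℤ) - (i : ℤ)) = Uᴴ ^ i * U ^ j := by
  have key : ∀ k : ℕ, Uᴴ ^ k * U ^ k = 1 := by
    intro k
    induction k with
    | zero => simp
    | succ k ih =>
      rw [pow_succ, pow_succ', Matrix.mul_assoc, ← Matrix.mul_assoc Uᴴ U, hU₁, Matrix.one_mul, ih]
  unfold zpowU
  split_ifs with hz
  · obtain ⟨m, rfl⟩ : ∃ m, j = i + m := ⟨j - i, by omega⟩
    have : (((i + m : ℕ) : ℤ) - (i : ℤ)).toNat = m := by omega
    rw [this, pow_add, ← Matrix.mul_assoc, key, Matrix.one_mul]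
  · obtain ⟨m, rfl⟩ : ∃ m, i = m + j := ⟨i - j, by omega⟩
    have : (-((j : ℤ) - ((m + j : ℕ) : ℤ))).toNat = m := by omega
    rw [this, pow_add, Matrix.mul_assoc, key, Matrix.mul_one]

theorem Xmat_sq {n τ : ℕ} (U : Matrix (Fin n) (Fin n) ℂ) (hU₁ : Uᴴ * U = 1) (hU₂ : U * Uᴴ = 1)
    (ρ : ℝ) : Xmat τ ρ U * Xmat τ ρ U =
      (((∑ k ∈ Finset.range τ, ρ ^ (2 * k) : ℝ)) : ℂ) • Xmat τ ρ U := by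
  have key : ∀ k : ℕ, U ^ k * Uᴴ ^ k = 1 := by
    intro k
    induction k with
    | zero => simp
    | succ k ih =>
      rw [pow_succ, pow_succ', Matrix.mul_assoc, ← Matrix.mul_assoc U Uᴴ, hU₂, Matrix.one_mul, ih]
  ext ⟨i, a⟩ ⟨j, c⟩
  rw [Matrix.mul_apply, Fintype.sum_prod_type]
  have h1 : ∀ k : Fin τ, ∑ b, Xmat τ ρ U (i, a) (k, b) * Xmat τ ρ U (k, b) (j, c)
      = (ρ : ℂ) ^ (2 * (k : ℕ)) * Xmat τ ρ U (i, a) (j, c) := by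
    intro k
    have h2 : (Uᴴ ^ (i : ℕ) * U ^ (k : ℕ)) * (Uᴴ ^ (k : ℕ) * U ^ (j : ℕ))
        = Uᴴ ^ (i : ℕ) * U ^ (j : ℕ) := by
      rw [Matrix.mul_assoc, ← Matrix.mul_assoc (U ^ (k : ℕ)), key, Matrix.one_mul]
    simp only [Xmat, zpowU_sub U hU₁]
    rw [← h2, Matrix.mul_apply (M := Uᴴ ^ (i : ℕ) * U ^ (k : ℕ)), Finset.mul_sum, Finset.mul_sum]
    refine Finset.sum_congr rfl fun b _ => ?_
    ring
  rw [Finset.sum_congr rfl fun k _ => h1 k, ← Finset.sum_mul, Matrix.smul_apply, smul_eq_mul,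
    Fin.sum_univ_eq_sum_range (fun k => (ρ : ℂ) ^ (2 * k)) τ]
  push_cast
  rfl

/-- every eigenvalue of `X_ρ` is `0` or `λ = ∑_{k<τ} ρ^(2k)`. -/
theorem stmt_1 {n τ : ℕ} (hn : 0 < n) (hτ : 0 < τ)
    (U : Matrix (Fin n) (Fin n) ℂ) (hU₁ : Uᴴ * U = 1) (hU₂ : U * Uᴴ = 1)
    (ρ : ℝ) (hρ : ρ ∈ Set.Ioc (0 : ℝ) 1)
    (ξ : Fin τ × Fin n → ℂ) (hξ : ξ ≠ 0) (κ : ℂ)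
    (h : (Xmat τ ρ U).mulVec ξ = κ • ξ) :
    κ = 0 ∨ κ = (((∑ k ∈ Finset.range τ, ρ ^ (2 * k) : ℝ)) : ℂ) := by
  have h2 : (Xmat τ ρ U * Xmat τ ρ U).mulVec ξ = κ • κ • ξ := by
    rw [← Matrix.mulVec_mulVec, h, Matrix.mulVec_smul, h]
  rw [Xmat_sq U hU₁ hU₂, Matrix.smul_mulVec, h] at h2
  obtain ⟨p, hp⟩ := Function.ne_iff.mp hξ
  have h3 := congrFun h2 p
  simp only [Pi.smul_apply, smul_eq_mul] at h3
  by_cases hk : κ = 0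
  · exact Or.inl hk
  · right
    exact (mul_right_cancel₀ (mul_ne_zero hk hp) h3).symm
end

section
/- If τ = k·n for a positive integer k, then for each j = 1, …, n the τ-dimensional vector ζ_j = (ω_j^{-(i-1)})_{i=1}^{τ}, with ω_j = e^{2πij/n}, is an eigenvector of the τ×τ metric tensor Q: there exists μ_j ≥ 0 with Q ζ_j = μ_j ζ_j. -/
open Matrix Finset

/-- The n×n cyclic shift permutation matrix: `C e_k = e_{k+1 mod n}`,
i.e. `C_{ij} = 1` iff `i ≡ j + 1 (mod n)`. -/
def cycC (n : ℕ) : Matrix (Fin n) (Fin n) ℂ :=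
  fun i j => if (i : ℕ) = ((j : ℕ) + 1) % n then 1 else 0

/-- The n-th root of unity `ω_j = e^{2πij/n}`. -/
noncomputable def omega (n : ℕ) (j : ℕ) : ℂ :=
  Complex.exp (2 * Real.pi * Complex.I * j / n)

/-- The τ×τ metric tensor `Q` of the reservoir kernel with cyclic-shift coupling
(0-based indices): `Q_{ij} = w* (C*)^i C^j w`. -/
noncomputable def QmetTau (n τ : ℕ) (w : Fin n → ℂ) : Matrix (Fin τ) (Fin τ) ℂ :=
  fun i j => star w ⬝ᵥ (((cycC n)ᴴ ^ (i : ℕ) * cycC n ^ (j : ℕ)).mulVec w)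

lemma cycC_pow (n : ℕ) (m : ℕ) (i j : Fin n) :
    (cycC n ^ m) i j = if (i : ℕ) = ((j : ℕ) + m) % n then 1 else 0 := by
  have hn : 0 < n := i.pos
  induction m generalizing i j with
  | zero =>
    simp [Matrix.one_apply, Fin.ext_iff, Nat.mod_eq_of_lt j.isLt]
  | succ m ih =>
    rw [pow_succ, Matrix.mul_apply,
      Finset.sum_eq_single (⟨((j : ℕ) + 1) % n, Nat.mod_lt _ hn⟩ : Fin n)]
    · rw [ih]
      simp only [cycC, if_true, mul_one, Nat.mod_add_mod]
      rw [show (j : ℕ) + 1 + m = j + (m + 1) by ring]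
    · intro b _ hb
      have : ¬ (b : ℕ) = ((j : ℕ) + 1) % n := fun h => hb (Fin.ext h)
      simp [cycC, this]
    · simp

lemma cycC_pow_self (n : ℕ) : cycC n ^ n = 1 := by
  ext i j
  rw [cycC_pow]
  simp [Matrix.one_apply, Fin.ext_iff, Nat.mod_eq_of_lt j.isLt]

lemma cycC_unit (n : ℕ) : (cycC n)ᴴ * cycC n = 1 := by
  ext i j
  have hn : 0 < n := i.pos
  rw [Matrix.mul_apply,
      Finset.sum_eq_single (⟨((j : ℕ) + 1) % n, Nat.mod_lt _ hn⟩ : Fin n)]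
  · have key : ((j : ℕ) + 1) % n = ((i : ℕ) + 1) % n ↔ i = j := by
      constructor
      · intro h
        have h2 : (j : ℕ) ≡ i [MOD n] := Nat.ModEq.add_right_cancel' 1 h
        exact Fin.ext (Nat.ModEq.eq_of_lt_of_lt h2 j.isLt i.isLt).symm
      · rintro rfl
        rfl
    simp only [Matrix.conjTranspose_apply, cycC, if_true, mul_one, key, Matrix.one_apply]
    split_ifs <;> simp
  · intro b _ hb
    have : ¬ (b : ℕ) = ((j : ℕ) + 1) % n := fun h => hb (Fin.ext h)
    simp [cycC, this]
  · simp

lemma omega_pow_self (n j : ℕ) (hn : 0 < n) : omega n j ^ n = 1 := by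
  rw [omega, ← Complex.exp_nat_mul, Complex.exp_eq_one_iff]
  refine ⟨j, ?_⟩
  have : (n : ℂ) ≠ 0 := by exact_mod_cast hn.ne'
  field_simp
  try push_cast
  try ring

lemma omega_star_inv (n j : ℕ) : star (omega n j)⁻¹ = omega n j := by
  rw [omega, ← Complex.exp_neg, Complex.star_def, ← Complex.exp_conj]
  congr 1
  have h2 : (starRingEnd ℂ) 2 = 2 := Complex.conj_ofNat 2
  simp [h2]
  ring

/-- when `τ = k·n`, each vector `ζ_j = (ω_j^{-(i-1)})_{i=1}^τ` is an
eigenvector of `Q` with some nonnegative eigenvalue `μ_j`. -/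
theorem stmt_10 (n k : ℕ) (hn : 0 < n) (hk : 0 < k) (w : Fin n → ℂ) :
    ∀ j : Fin n, ∃ μ : ℝ, 0 ≤ μ ∧
      (QmetTau n (k * n) w).mulVec
          (fun i : Fin (k * n) => omega n ((j : ℕ) + 1) ^ (-(i : ℤ))) =
        (μ : ℂ) • (fun i : Fin (k * n) => omega n ((j : ℕ) + 1) ^ (-(i : ℤ))) := by
  intro j
  set z := omega n ((j : ℕ) + 1) with hz
  have hz0 : z ≠ 0 := Complex.exp_ne_zero _
  set D : Matrix (Fin n) (Fin n) ℂ := z⁻¹ • cycC n with hD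
  set S := ∑ l ∈ Finset.range (k * n), D ^ l with hS
  have hDH : Dᴴ = z • (cycC n)ᴴ := by
    rw [hD, Matrix.conjTranspose_smul, hz, omega_star_inv]
  have hDD : Dᴴ * D = 1 := by
    rw [hDH, hD, Matrix.smul_mul, Matrix.mul_smul, cycC_unit, smul_smul, mul_inv_cancel₀ hz0,
      one_smul]
  have hDt : D ^ (k * n) = 1 := by
    rw [hD, smul_pow, mul_comm k n, pow_mul, pow_mul, cycC_pow_self, inv_pow, hz,
      omega_pow_self _ _ hn]
    simp
  have hDS : D * S = S := by
    have h := mul_geom_sum D (k * n)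
    rw [hDt, sub_self, sub_mul, one_mul, sub_eq_zero] at h
    exact h
  have hHS : ∀ i : ℕ, Dᴴ ^ i * S = S := by
    have h1 : Dᴴ * S = S := by
      conv_lhs => rw [← hDS]
      rw [← Matrix.mul_assoc, hDD, Matrix.one_mul]
    intro i
    induction i with
    | zero => simp
    | succ i ih => rw [pow_succ, Matrix.mul_assoc, h1, ih]
  have hCS : ∀ i : ℕ, (cycC n)ᴴ ^ i * S = z ^ (-(i : ℤ)) • S := by
    intro i
    have h := hHS i
    rw [hDH, smul_pow, Matrix.smul_mul] at h
    conv_rhs => rw [← h]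
    rw [smul_smul, _root_.zpow_neg, zpow_natCast, inv_mul_cancel₀ (pow_ne_zero _ hz0), one_smul]
  have hSS : Sᴴ * S = ((k * n : ℕ) : ℂ) • S := by
    conv_lhs => rw [hS, Matrix.conjTranspose_sum, ← hS]
    rw [Finset.sum_mul]
    simp only [Matrix.conjTranspose_pow, hHS]
    simp [← Nat.cast_smul_eq_nsmul ℂ]
  have hτ : ((k * n : ℕ) : ℂ) ≠ 0 := by exact_mod_cast (Nat.mul_pos hk hn).ne'
  have hμ : star (S.mulVec w) ⬝ᵥ S.mulVec w = ((k * n : ℕ) : ℂ) * (star w ⬝ᵥ S.mulVec w) := by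
    rw [Matrix.star_mulVec, ← Matrix.dotProduct_mulVec, Matrix.mulVec_mulVec, hSS,
      Matrix.smul_mulVec, dotProduct_smul, smul_eq_mul]
  have hsq : star (S.mulVec w) ⬝ᵥ S.mulVec w
      = ((∑ l, Complex.normSq (S.mulVec w l) : ℝ) : ℂ) := by
    simp [dotProduct, Complex.normSq_eq_conj_mul_self]
  refine ⟨(∑ l, Complex.normSq (S.mulVec w l)) / (k * n : ℕ),
    div_nonneg (Finset.sum_nonneg fun _ _ => Complex.normSq_nonneg _) (Nat.cast_nonneg _), ?_⟩
  have hμ2 : (((∑ l, Complex.normSq (S.mulVec w l)) / (k * n : ℕ) : ℝ) : ℂ)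
      = star w ⬝ᵥ S.mulVec w := by
    rw [Complex.ofReal_div, ← hsq, hμ, Complex.ofReal_natCast, mul_div_cancel_left₀ _ hτ]
  rw [hμ2]
  ext i
  rw [Pi.smul_apply, smul_eq_mul]
  have h3 : star w ⬝ᵥ ((cycC n)ᴴ ^ (i : ℕ) * S).mulVec w
      = z ^ (-(i : ℤ)) * (star w ⬝ᵥ S.mulVec w) := by
    rw [hCS, Matrix.smul_mulVec, dotProduct_smul, smul_eq_mul]
  rw [mul_comm (star w ⬝ᵥ S.mulVec w), ← h3, hS, Finset.mul_sum, Matrix.sum_mulVec, dotProduct_sum,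
    Finset.sum_range]
  simp only [Matrix.mulVec, QmetTau]
  rw [dotProduct]
  refine Finset.sum_congr rfl fun l _ => ?_
  rw [hD, smul_pow, Matrix.mul_smul]
  change _ = star w ⬝ᵥ (((z⁻¹ ^ (l : ℕ)) • ((cycC n)ᴴ ^ (i : ℕ) * cycC n ^ (l : ℕ))).mulVec w)
  rw [Matrix.smul_mulVec, dotProduct_smul, smul_eq_mul, mul_comm, _root_.zpow_neg, zpow_natCast, inv_pow]
end

section
/- Every real symmetric centrosymmetric n×n matrix A admits an orthonormal basis of ℝ^n consisting of eigenvectors of A, of which exactly ⌈n/2⌉ are symmetric (Jv = v) and exactly ⌊n/2⌋ are skew-symmetric (Jv = −v). -/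
open Matrix Finset

/-- The n×n exchange matrix `J`: ones on the antidiagonal, zeros elsewhere. -/
def exchMat (n : ℕ) : Matrix (Fin n) (Fin n) ℝ :=
  fun i j => if j = i.rev then 1 else 0

lemma exch_mulVec (n : ℕ) (x : Fin n → ℝ) (i : Fin n) :
    (exchMat n).mulVec x i = x i.rev := by
  simp [exchMat, Matrix.mulVec, dotProduct]

lemma exch_sq (n : ℕ) (x : Fin n → ℝ) :
    (exchMat n).mulVec ((exchMat n).mulVec x) = x := by
  ext i; simp [exch_mulVec]

lemma exch_mul_self (n : ℕ) : exchMat n * exchMat n = 1 := by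
  apply Matrix.toLin'.injective
  apply LinearMap.ext
  intro x
  rw [Matrix.toLin'_apply, Matrix.toLin'_apply, ← Matrix.mulVec_mulVec, exch_sq, Matrix.one_mulVec]

lemma exch_transpose (n : ℕ) : (exchMat n)ᵀ = exchMat n := by
  ext i j
  simp only [exchMat, Matrix.transpose_apply]
  congr 1
  simp only [Fin.ext_iff, Fin.val_rev, eq_iff_iff]
  omega

lemma exch_trace (n : ℕ) : (exchMat n).trace = ((n % 2 : ℕ) : ℝ) := by
  simp only [Matrix.trace, Matrix.diag, exchMat]
  rw [Finset.sum_boole]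
  congr 1
  rcases Nat.mod_two_eq_zero_or_one n with h | h
  · rw [h, Finset.card_eq_zero, Finset.filter_eq_empty_iff]
    intro i _
    simp only [Fin.ext_iff, Fin.val_rev]
    omega
  · rw [h, Finset.card_eq_one]
    refine ⟨⟨n / 2, by omega⟩, ?_⟩
    ext i
    simp only [Finset.mem_filter, Finset.mem_univ, true_and, Finset.mem_singleton, Fin.ext_iff,
      Fin.val_rev]
    omega

theorem stmt_16 (n : ℕ) (hn : 0 < n) (A : Matrix (Fin n) (Fin n) ℝ)
    (hsym : Aᵀ = A) (hcentro : exchMat n * A * exchMat n = A) :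
    ∃ (v : Fin n → Fin n → ℝ) (μ : Fin n → ℝ) (S : Finset (Fin n)),
      (∀ i j : Fin n, v i ⬝ᵥ v j = if i = j then 1 else 0) ∧
      (∀ i : Fin n, A.mulVec (v i) = μ i • v i) ∧
      S.card = (n + 1) / 2 ∧
      (∀ i ∈ S, (exchMat n).mulVec (v i) = v i) ∧
      (∀ i ∉ S, (exchMat n).mulVec (v i) = -(v i)) := by
  classical
  set J := exchMat n with hJ
  have hcomm : A * J = J * A := by
    calc A * J = (J * A * J) * J := by rw [hcentro]
      _ = J * A := by rw [Matrix.mul_assoc, exch_mul_self, Matrix.mul_one]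
  have hfin : {x : ℝ | Module.End.HasEigenvalue (Matrix.toLin' A) x}.Finite :=
    Module.End.finite_hasEigenvalue _
  obtain ⟨t, ht⟩ := ((hfin.image2 (fun x y => (x - y) / 2) hfin)).exists_notMem
  have hB : (A + t • J).IsHermitian := by
    rw [Matrix.IsHermitian, Matrix.conjTranspose_eq_transpose_of_trivial, Matrix.transpose_add,
      Matrix.transpose_smul, hsym, hJ, exch_transpose]
  let v : Fin n → Fin n → ℝ := fun i => (hB.eigenvectorBasis i).ofLp
  have horth : ∀ i j : Fin n, v i ⬝ᵥ v j = if i = j then 1 else 0 := by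
    intro i j
    have := orthonormal_iff_ite.1 hB.eigenvectorBasis.orthonormal i j
    rw [← this, EuclideanSpace.inner_eq_star_dotProduct, dotProduct_comm]
    simp [v]
  have hne : ∀ i, v i ≠ 0 := by
    intro i h
    have := horth i i
    simp [h] at this
  have heig : ∀ i, A.mulVec (v i) = hB.eigenvalues i • v i - t • J.mulVec (v i) := by
    intro i
    have := hB.mulVec_eigenvectorBasis i
    rw [Matrix.add_mulVec, Matrix.smul_mulVec] at this
    exact eq_sub_of_add_eq this
  have hAJ : ∀ i, A.mulVec (J.mulVec (v i)) = hB.eigenvalues i • J.mulVec (v i) - t • v i := by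
    intro i
    rw [Matrix.mulVec_mulVec, hcomm, ← Matrix.mulVec_mulVec, heig, Matrix.mulVec_sub,
      Matrix.mulVec_smul, Matrix.mulVec_smul, show J.mulVec (J.mulVec (v i)) = v i from exch_sq n (v i)]
  have hmem : ∀ (x : ℝ) (w : Fin n → ℝ), w ≠ 0 → A.mulVec w = x • w →
      Module.End.HasEigenvalue (Matrix.toLin' A) x := by
    intro x w hw h
    refine Module.End.hasEigenvalue_of_hasEigenvector (x := w) ⟨?_, hw⟩
    rw [Module.End.mem_eigenspace_iff, Matrix.toLin'_apply, h]
  have hdich : ∀ i, J.mulVec (v i) = v i ∨ J.mulVec (v i) = -(v i) := by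
    intro i
    by_contra! hcon
    apply ht
    refine ⟨hB.eigenvalues i + t, ?_, hB.eigenvalues i - t, ?_, by ring⟩
    · refine hmem _ (v i - J.mulVec (v i)) (fun h => hcon.1 (sub_eq_zero.1 h).symm) ?_
      rw [Matrix.mulVec_sub, heig, hAJ]
      module
    · refine hmem _ (J.mulVec (v i) + v i) (fun h => hcon.2 (eq_neg_of_add_eq_zero_left h)) ?_
      rw [Matrix.mulVec_add, heig, hAJ]
      module
  let S : Finset (Fin n) := Finset.univ.filter (fun i => J.mulVec (v i) = v i)
  have hS : ∀ i ∈ S, J.mulVec (v i) = v i := fun i hi => (Finset.mem_filter.1 hi).2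
  have hS' : ∀ i ∉ S, J.mulVec (v i) = -(v i) := fun i hi =>
    (hdich i).resolve_left (fun h => hi (Finset.mem_filter.2 ⟨Finset.mem_univ _, h⟩))
  refine ⟨v, fun i => hB.eigenvalues i + (if i ∈ S then -t else t), S, horth, ?_, ?_, hS, hS'⟩
  · intro i
    rw [heig]
    by_cases h : i ∈ S
    · rw [hS i h]; simp only [h, if_true]; module
    · rw [hS' i h]; simp only [h, if_false]; module
  · let V : Matrix (Fin n) (Fin n) ℝ := Matrix.of v
    have hVV : V * Vᵀ = 1 := by
      ext i j
      rw [Matrix.one_apply, ← horth i j]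
      rfl
    have hVV' : Vᵀ * V = 1 := mul_eq_one_comm.1 hVV
    have htr : (V * (J * Vᵀ)).trace = J.trace := by
      rw [Matrix.trace_mul_comm, Matrix.mul_assoc, hVV', Matrix.mul_one]
    have htr2 : (V * (J * Vᵀ)).trace = ∑ i, (if i ∈ S then (1 : ℝ) else -1) := by
      refine Finset.sum_congr rfl fun i _ => ?_
      have h0 : (V * (J * Vᵀ)).diag i = v i ⬝ᵥ J.mulVec (v i) := rfl
      rw [h0]
      by_cases h : i ∈ S
      · rw [hS i h, horth]; simp [h]
      · rw [hS' i h, dotProduct_neg, horth]; simp [h]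
    have hsum : ∑ i, (if i ∈ S then (1 : ℝ) else -1) = 2 * S.card - n := by
      have : ∀ i, (if i ∈ S then (1 : ℝ) else -1) = 2 * (if i ∈ S then 1 else 0) - 1 := by
        intro i; split_ifs <;> norm_num
      simp_rw [this]
      rw [Finset.sum_sub_distrib, ← Finset.mul_sum, Finset.sum_boole]
      simp
    have hfinal : (2 * S.card : ℝ) = ((n % 2 : ℕ) : ℝ) + n := by
      rw [← exch_trace, ← hJ, ← htr, htr2, hsum]; ring
    have : 2 * S.card = n % 2 + n := by exact_mod_cast hfinal
    omega
end
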